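/- For every natural number n with n ∉ {1,2} and every real (or complex) x, the Wronskian Wr(H₁,H₂,Hₙ)(x) equals 8·(n−1)·(n−2)·Ĥₙ(x), where the factors (n−1) and (n−2) are computed in ℝ (i.e., after casting n to ℝ). -/

import Mathlib

/-- Physicists' Hermite polynomials via the Rodrigues formula. -/
noncomputable def Hr (n : ℕ) (x : ℝ) : ℝ :=
  (-1) ^ n * Real.exp (x ^ 2) * iteratedDeriv n (fun t => Real.exp (-t ^ 2)) x

/-- Wronskian of three functions. -/
noncomputable def Wr (f g h : ℝ → ℝ) (x : ℝ) : ℝ :=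
  Matrix.det !![f x, g x, h x;
                deriv f x, deriv g x, deriv h x;
                deriv (deriv f) x, deriv (deriv g) x, deriv (deriv h) x]

/-- The function Ĥₙ. -/
noncomputable def Hhatr (n : ℕ) (x : ℝ) : ℝ :=
  Hr n x + 4 * (n : ℝ) * Hr (n - 2) x + 4 * (n : ℝ) * ((n : ℝ) - 3) * Hr (n - 4) x

/-!
The derivative of the Rodrigues formula is the raising relation `Hₙ' = 2 x Hₙ - Hₙ₊₁`, and together
with `H₀ = 1` it yields `Hₙ' = 2 n Hₙ₋₁` by induction. Expanding the determinant gives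
`Wr(H₁, H₂, h) = 16 h - 16 x h' + (8 x² + 4) h''` for every `h`. For `h = Hₙ` the Hermite equation
`Hₙ'' - 2 x Hₙ' + 2 n Hₙ = 0` eliminates `Hₙ'`, leaving `16 (1 - n) Hₙ + (8 x² - 4) Hₙ''`. Here
`Hₙ'' = 4 n (n - 1) Hₙ₋₂`, and the three-term recurrence, applied twice, expands `x² Hₙ₋₂` in `Hₙ`,
`Hₙ₋₂` and `Hₙ₋₄`.
-/

theorem hr_zero (x : ℝ) : Hr 0 x = 1 := by
  simp [Hr, ← Real.exp_add]

theorem hasDerivAt_iteratedDeriv_exp_neg_sq (n : ℕ) (x : ℝ) :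
    HasDerivAt (iteratedDeriv n fun t : ℝ => Real.exp (-t ^ 2))
      (iteratedDeriv (n + 1) (fun t => Real.exp (-t ^ 2)) x) x := by
  have gaussian_smooth : ContDiff ℝ (n + 1) fun t : ℝ => Real.exp (-t ^ 2) := by fun_prop
  rw [iteratedDeriv_succ]
  exact (gaussian_smooth.differentiable_iteratedDeriv' n x).hasDerivAt

theorem hasDerivAt_hr_raising (n : ℕ) (x : ℝ) :
    HasDerivAt (Hr n) (2 * x * Hr n x - Hr (n + 1) x) x := by
  have hasDerivAt_factor : HasDerivAt (fun t : ℝ => (-1) ^ n * Real.exp (t ^ 2))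
      ((-1) ^ n * (Real.exp (x ^ 2) * (2 * x))) x := by
    simpa using (hasDerivAt_pow 2 x).exp.const_mul ((-1 : ℝ) ^ n)
  refine (hasDerivAt_factor.mul (hasDerivAt_iteratedDeriv_exp_neg_sq n x)).congr_deriv ?_
  simp only [Hr]
  ring

/-- The index `n - 1` truncates only at `n = 0`, where its coefficient vanishes; likewise for the
indices `n - 1` and `n - 2` in the identities that follow. -/
theorem hasDerivAt_hr (n : ℕ) (x : ℝ) : HasDerivAt (Hr n) (2 * n * Hr (n - 1) x) x := by
  induction n generalizing x with
  | zero => simpa [funext hr_zero] using hasDerivAt_const x (1 : ℝ)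
  | succ n ih =>
    have recurrence : Hr (n + 1) = fun t => 2 * t * Hr n t - 2 * n * Hr (n - 1) t := by
      funext t
      linear_combination -(hasDerivAt_hr_raising n t).unique (ih t)
    have reindex : n * Hr (n - 1 + 1) x = n * Hr n x := by cases n <;> simp
    rw [recurrence]
    refine ((((hasDerivAt_id x).const_mul 2).mul (ih x)).sub
      ((hasDerivAt_hr_raising (n - 1) x).const_mul (2 * (n : ℝ)))).congr_deriv ?_
    simp only [id_eq, Nat.add_sub_cancel, Nat.cast_succ]
    linear_combination 2 * reindex

theorem deriv_hr (n : ℕ) : deriv (Hr n) = fun x => 2 * n * Hr (n - 1) x :=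
  funext fun x => (hasDerivAt_hr n x).deriv

theorem hr_succ (n : ℕ) (x : ℝ) : Hr (n + 1) x = 2 * x * Hr n x - 2 * n * Hr (n - 1) x := by
  linear_combination -(hasDerivAt_hr_raising n x).unique (hasDerivAt_hr n x)

theorem hr_one (x : ℝ) : Hr 1 x = 2 * x := by
  simp [hr_succ 0, hr_zero]

theorem hr_two (x : ℝ) : Hr 2 x = 4 * x ^ 2 - 2 := by
  simp only [hr_succ 1, hr_one, hr_zero, Nat.sub_self, Nat.cast_one]
  ring

theorem deriv_deriv_hr (n : ℕ) :
    deriv (deriv (Hr n)) = fun x => 4 * n * (n - 1) * Hr (n - 2) x := by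
  funext x
  rw [deriv_hr, ((hasDerivAt_hr (n - 1) x).const_mul (2 * (n : ℝ))).deriv]
  cases n with
  | zero => simp
  | succ n =>
    simp only [Nat.add_sub_cancel, Nat.reduceSubDiff, Nat.cast_succ]
    ring

theorem hermite_equation (n : ℕ) (x : ℝ) :
    deriv (deriv (Hr n)) x - 2 * x * deriv (Hr n) x + 2 * n * Hr n x = 0 := by
  have raising : deriv (Hr n) = fun t => 2 * t * Hr n t - Hr (n + 1) t :=
    funext fun t => (hasDerivAt_hr_raising n t).deriv
  have second : HasDerivAt (deriv (Hr n))
      (2 * Hr n x + 2 * x * deriv (Hr n) x - 2 * (n + 1) * Hr n x) x := by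
    rw [raising]
    refine ((((hasDerivAt_id x).const_mul 2).mul (hasDerivAt_hr_raising n x)).sub
      (hasDerivAt_hr (n + 1) x)).congr_deriv ?_
    simp
  rw [second.deriv]
  ring

theorem four_mul_sq_mul_hr (n : ℕ) (x : ℝ) :
    4 * x ^ 2 * Hr n x =
      Hr (n + 2) x + 2 * (2 * n + 1) * Hr n x + 4 * n * (n - 1) * Hr (n - 2) x := by
  have lower : n * Hr n x = n * (2 * x * Hr (n - 1) x - 2 * (n - 1) * Hr (n - 2) x) := by
    cases n with
    | zero => simp
    | succ n => simp [hr_succ n]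
  have upper := hr_succ (n + 1) x
  simp only [Nat.add_sub_cancel, Nat.cast_succ] at upper
  linear_combination -upper - 2 * x * hr_succ n x - 2 * lower

theorem wr_hr_one_hr_two (h : ℝ → ℝ) (x : ℝ) :
    Wr (Hr 1) (Hr 2) h x =
      16 * h x - 16 * x * deriv h x + (8 * x ^ 2 + 4) * deriv (deriv h) x := by
  have deriv_hr_one : deriv (Hr 1) = fun _ => 2 := by
    simp [deriv_hr, hr_zero]
  have deriv_hr_two : deriv (Hr 2) x = 8 * x := by
    simp only [deriv_hr, hr_one, Nat.add_one_sub_one, Nat.cast_ofNat]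
    ring
  have deriv_deriv_hr_two : deriv (deriv (Hr 2)) x = 8 := by
    norm_num [deriv_deriv_hr, hr_zero]
  simp only [Wr, deriv_deriv_hr_two, deriv_hr_two, deriv_hr_one, deriv_const, hr_one, hr_two,
    Matrix.det_fin_three, Matrix.of_apply, Matrix.cons_val]
  ring

theorem wr_hr_one_hr_two_hr (n : ℕ) (x : ℝ) :
    Wr (Hr 1) (Hr 2) (Hr n) x =
      16 * (1 - n) * Hr n x + 4 * n * (n - 1) * (8 * x ^ 2 - 4) * Hr (n - 2) x := by
  rw [wr_hr_one_hr_two]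
  linear_combination 8 * hermite_equation n x + (8 * x ^ 2 - 4) * congrFun (deriv_deriv_hr n) x

theorem stmt0 (n : ℕ) (hn : n ∉ ({1, 2} : Set ℕ)) (x : ℝ) :
    Wr (Hr 1) (Hr 2) (Hr n) x = 8 * ((n : ℝ) - 1) * ((n : ℝ) - 2) * Hhatr n x := by
  rw [wr_hr_one_hr_two_hr, Hhatr]
  match n with
  | 0 => norm_num
  | 1 => simp
  | m + 2 =>
    simp only [Nat.add_sub_cancel, Nat.reduceSubDiff, Nat.cast_add, Nat.cast_ofNat]
    linear_combination 8 * ((m : ℝ) + 2) * (m + 1) * four_mul_sq_mul_hr m x
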